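/- If the Erdős set E has Hausdorff dimension 0, then Szemerédi's theorem holds: every A ⊆ ℕ with positive upper Banach density contains arbitrarily long arithmetic progressions. -/

import Mathlib

open Filter MeasureTheory Set

/-- The `n`-th binary digit of `x ∈ [0,1)` (dyadic rationals get the
terminating expansion, i.e. the one with finitely many `1`'s). -/
noncomputable def digit (x : ℝ) (n : ℕ) : ℕ := (⌊x * 2 ^ n⌋).toNat % 2

/-- Positions of digit `1` in the binary expansion of `x`. -/
def onesOf (x : ℝ) : Set ℕ := {n : ℕ | digit x n = 1}

/-- `A` contains an `m`-term arithmetic progression. -/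
def HasAP (A : Set ℕ) (m : ℕ) : Prop :=
  ∃ a d : ℕ, 1 ≤ d ∧ ∀ t < m, a + t * d ∈ A

/-- `F i`: numbers in `[0,1)` whose binary expansion contains no `i`-term
arithmetic progression of positions of digit `1`. -/
noncomputable def F (i : ℕ) : Set ℝ :=
  {x ∈ Set.Ico (0 : ℝ) 1 | ¬ HasAP (onesOf x) i}

/-- The Erdős set. -/
noncomputable def E : Set ℝ := ⋃ i, ⋃ (_ : 3 ≤ i), F i

/-- Upper Banach density of a set of naturals. -/
noncomputable def banachDensity (A : Set ℕ) : ℝ :=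
  Filter.limsup
    (fun k : ℕ => ⨆ M : ℕ, ((A ∩ Set.Ico M (M + k)).ncard : ℝ) / k)
    Filter.atTop

/-- Base-4 value of a digit sequence. -/
noncomputable def V4 (b : ℕ → ℕ) : ℝ := ∑' k, (b k : ℝ) * ((1 / 4 : ℝ) ^ (k + 1))

theorem geo4 : HasSum (fun k : ℕ => (1 / 4 : ℝ) ^ (k + 1)) (1 / 3) := by
  have h := (hasSum_geometric_of_lt_one (r := (1 / 4 : ℝ)) (by norm_num) (by norm_num)).mul_right
    (1 / 4)
  have e : (1 - 1 / 4 : ℝ)⁻¹ * (1 / 4) = 1 / 3 := by norm_num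
  rw [e] at h
  simpa [pow_succ] using h

theorem V4_summable {b : ℕ → ℕ} (hb : ∀ k, b k ≤ 1) :
    Summable (fun k => (b k : ℝ) * ((1 / 4 : ℝ) ^ (k + 1))) := by
  refine Summable.of_nonneg_of_le (fun k => by positivity) (fun k => ?_) geo4.summable
  have : (b k : ℝ) ≤ 1 := by exact_mod_cast hb k
  exact mul_le_of_le_one_left (by positivity) this

theorem V4_nonneg (b : ℕ → ℕ) : 0 ≤ V4 b := tsum_nonneg fun k => by positivity

theorem V4_le {b : ℕ → ℕ} (hb : ∀ k, b k ≤ 1) : V4 b ≤ 1 / 3 := by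
  rw [← geo4.tsum_eq]
  refine (V4_summable hb).tsum_le_tsum (fun k => ?_) geo4.summable
  have : (b k : ℝ) ≤ 1 := by exact_mod_cast hb k
  exact mul_le_of_le_one_left (by positivity) this

theorem V4_step {b : ℕ → ℕ} (hb : ∀ k, b k ≤ 1) :
    V4 b = (b 0 + V4 (fun k => b (k + 1))) / 4 := by
  unfold V4
  rw [(V4_summable hb).tsum_eq_zero_add]
  have : ∀ k, (b (k + 1) : ℝ) * (1 / 4 : ℝ) ^ (k + 1 + 1)
      = ((b (k + 1) : ℝ) * (1 / 4 : ℝ) ^ (k + 1)) * (1 / 4) := fun k => by ring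
  simp_rw [this]
  rw [tsum_mul_right]
  ring

/-- integer part sequence -/
def N4 (b : ℕ → ℕ) : ℕ → ℕ
  | 0 => 0
  | m + 1 => 4 * N4 b m + b m

theorem V4_mul {b : ℕ → ℕ} (hb : ∀ k, b k ≤ 1) (m : ℕ) :
    V4 b * 4 ^ m = N4 b m + V4 (fun k => b (k + m)) := by
  induction m with
  | zero => simp [N4]
  | succ m ih =>
    have h := V4_step (b := fun k => b (k + m)) (fun k => hb _)
    have e : (fun k => b (k + 1 + m)) = fun k => b (k + (m + 1)) := by
      funext k; congr 1; omega
    simp only [e, Nat.zero_add] at h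
    rw [pow_succ, ← mul_assoc, ih, h]
    simp only [N4]
    push_cast
    ring

theorem N4_congr {b b' : ℕ → ℕ} (n : ℕ) (h : ∀ m < n, b m = b' m) : N4 b n = N4 b' n := by
  induction n with
  | zero => rfl
  | succ n ih =>
    simp only [N4]
    rw [ih (fun m hm => h m (by omega)), h n (by omega)]

theorem V4_sep {b b' : ℕ → ℕ} (hb : ∀ k, b k ≤ 1) (hb' : ∀ k, b' k ≤ 1) (n : ℕ)
    (h : ∀ m < n, b m = b' m) (hn : b n ≠ b' n) :
    (1 / 4 : ℝ) ^ n / 6 ≤ |V4 b - V4 b'| := by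
  wlog hlt : b' n < b n generalizing b b'
  · rw [abs_sub_comm]
    exact this hb' hb (fun m hm => (h m hm).symm) hn.symm (by omega)
  have h1 : b n = 1 := by have := hb n; omega
  have h0 : b' n = 0 := by have := hb n; omega
  have e1 := V4_mul hb n
  have e2 := V4_mul hb' n
  rw [N4_congr n h] at e1
  have s1 := V4_step (b := fun k => b (k + n)) (fun k => hb _)
  have s2 := V4_step (b := fun k => b' (k + n)) (fun k => hb' _)
  have t1 := V4_nonneg (fun k => b (k + 1 + n))
  have t2 := V4_le (b := fun k => b' (k + 1 + n)) (fun k => hb' _)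
  simp only [Nat.zero_add, h1, h0] at s1 s2
  push_cast at s1 s2
  have key : 1 / 6 ≤ (V4 b - V4 b') * 4 ^ n := by
    rw [sub_mul, e1, e2, s1, s2]; linarith
  refine le_trans ?_ (le_abs_self _)
  have p : (0 : ℝ) < 4 ^ n := by positivity
  rw [div_pow, one_pow, div_div, div_le_iff₀ (by positivity)]
  linarith

theorem digit_V4 {b : ℕ → ℕ} (hb : ∀ k, b k ≤ 1) {n : ℕ} (hn : n ∈ onesOf (V4 b)) :
    ∃ m, n = 2 * (m + 1) ∧ b m = 1 := by
  have hd : digit (V4 b) n = 1 := hn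
  unfold digit at hd
  obtain ⟨m, rfl | rfl⟩ : ∃ m, n = 2 * m ∨ n = 2 * m + 1 := ⟨n / 2, by omega⟩
  · have e := V4_mul hb m
    have t0 := V4_nonneg (fun k => b (k + m))
    have t1 := V4_le (b := fun k => b (k + m)) (fun k => hb _)
    have : ⌊V4 b * 2 ^ (2 * m)⌋ = (N4 b m : ℤ) := by
      rw [pow_mul, Int.floor_eq_iff]
      norm_num
      rw [e]
      constructor <;> linarith
    rw [this, Int.toNat_natCast] at hd
    cases m with
    | zero => simp [N4] at hd
    | succ m =>
      refine ⟨m, rfl, ?_⟩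
      simp only [N4] at hd
      have := hb m
      omega
  · have e := V4_mul hb m
    have t0 := V4_nonneg (fun k => b (k + m))
    have t1 := V4_le (b := fun k => b (k + m)) (fun k => hb _)
    have : ⌊V4 b * 2 ^ (2 * m + 1)⌋ = ((2 * N4 b m : ℕ) : ℤ) := by
      rw [pow_succ, pow_mul, Int.floor_eq_iff, ← mul_assoc]
      norm_num
      rw [e]
      constructor <;> linarith
    rw [this, Int.toNat_natCast] at hd
    omega

theorem V4_mem_E {b : ℕ → ℕ} (hb : ∀ k, b k ≤ 1) {S : Set ℕ} (hS : ∀ m, b m = 1 → m ∈ S)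
    {L : ℕ} (hL : 3 ≤ L) (hAP : ¬ HasAP S L) : V4 b ∈ E := by
  simp only [E, Set.mem_iUnion]
  refine ⟨L, hL, ⟨V4_nonneg b, (V4_le hb).trans_lt (by norm_num)⟩, ?_⟩
  rintro ⟨a, d, hd, h⟩
  apply hAP
  obtain ⟨m0, e0, -⟩ := digit_V4 hb (h 0 (by omega))
  obtain ⟨m1, e1, -⟩ := digit_V4 hb (h 1 (by omega))
  obtain ⟨d', rfl⟩ : ∃ d', d = 2 * d' := ⟨d / 2, by omega⟩
  refine ⟨m0, d', by omega, fun t ht => ?_⟩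
  obtain ⟨m, e, hm⟩ := digit_V4 hb (h t ht)
  have : t * (2 * d') = 2 * (t * d') := by ring
  have : m0 + t * d' = m := by omega
  rw [this]
  exact hS m hm

open Classical in
/-- spread digits over the positions in `S` -/
noncomputable def spread (S : Set ℕ) (ε : ℕ → Fin 2) (n : ℕ) : ℕ :=
  if n ∈ S then (ε (Nat.count (· ∈ S) n) : ℕ) else 0

theorem spread_le (S : Set ℕ) (ε : ℕ → Fin 2) (n : ℕ) : spread S ε n ≤ 1 := by
  unfold spread
  split_ifs
  · omega
  · omega

open Classical in
theorem holder_key {S : Set ℕ} {δ : ℝ} (hδ : 0 < δ)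
    (hS : ∀ n : ℕ, δ * n - 1 ≤ (Nat.count (· ∈ S) n : ℝ)) (ε ε' : ℕ → Fin 2) :
    |Real.ofDigits ε - Real.ofDigits ε'| ≤
      (2 * 6 ^ (δ / 2)) * |V4 (spread S ε) - V4 (spread S ε')| ^ (δ / 2) := by
  by_cases hne : ε = ε'
  · subst hne
    simp only [sub_self, abs_zero]
    positivity
  have hinf : (Set.ofPred (· ∈ S)).Infinite := by
    intro hfin
    obtain ⟨n, hn⟩ := exists_nat_gt ((hfin.toFinset.card + 1 : ℝ) / δ)
    rw [div_lt_iff₀ hδ] at hn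
    have h1 := hS n
    have h2 : Nat.count (· ∈ S) n ≤ hfin.toFinset.card := by
      rw [Nat.count_eq_card_filter_range]
      apply Finset.card_le_card
      intro x hx
      simp only [Finset.mem_filter] at hx
      rw [Set.Finite.mem_toFinset]
      exact hx.2
    have h3 : (Nat.count (· ∈ S) n : ℝ) ≤ hfin.toFinset.card := by exact_mod_cast h2
    linarith
  have hex : ∃ i, ε i ≠ ε' i := by
    by_contra! hcon
    exact hne (funext hcon)
  set i := Nat.find hex with hi
  have hdi : ε i ≠ ε' i := Nat.find_spec hex
  have hlt : ∀ j < i, ε j = ε' j := fun j hj => by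
    have := Nat.find_min hex hj
    push Not at this
    exact this
  set n := Nat.nth (· ∈ S) i with hn
  have hnS : n ∈ S := Nat.nth_mem_of_infinite hinf i
  have hc : Nat.count (· ∈ S) n = i := Nat.count_nth_of_infinite hinf i
  have hsep := V4_sep (spread_le S ε) (spread_le S ε') n (fun m hm => by
      unfold spread
      split_ifs with hmS
      · have := Nat.count_strict_mono (p := (· ∈ S)) hmS hm
        rw [hlt _ (by omega)]
      · rfl) (by
      unfold spread
      rw [if_pos hnS, if_pos hnS, hc]
      exact fun h => hdi (Fin.ext h))
  have hup := Real.abs_ofDigits_sub_ofDigits_le hlt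
  have hin := hS n
  rw [hc] at hin
  refine hup.trans ?_
  have hD : (1 / 4 : ℝ) ^ n ≤ 6 * |V4 (spread S ε) - V4 (spread S ε')| := by linarith
  rw [mul_assoc, ← Real.mul_rpow (by norm_num) (abs_nonneg _)]
  refine le_trans ?_ (mul_le_mul_of_nonneg_left
    (Real.rpow_le_rpow (by positivity) hD (by positivity)) (by norm_num))
  have e1 : (((1 / 4 : ℝ) ^ n) ^ (δ / 2)) = (2 : ℝ) ^ (-(δ * n)) := by
    have : (1 / 4 : ℝ) ^ n = (2 : ℝ) ^ (-(2 * n : ℝ)) := by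
      rw [Real.rpow_neg (by norm_num), Real.rpow_mul (by norm_num), Real.rpow_natCast]
      norm_num [div_pow]
    rw [this, ← Real.rpow_mul (by norm_num)]
    congr 1; ring
  have e2 : (((2 : ℕ) : ℝ) ^ i)⁻¹ = (2 : ℝ) ^ (-(i : ℝ)) := by
    rw [Real.rpow_neg (by norm_num), Real.rpow_natCast]; norm_num
  rw [e1, e2]
  calc (2 : ℝ) ^ (-(i : ℝ)) ≤ (2 : ℝ) ^ (1 + -(δ * n)) :=
        Real.rpow_le_rpow_of_exponent_le (by norm_num) (by linarith)
    _ = 2 * (2 : ℝ) ^ (-(δ * n)) := by rw [Real.rpow_add (by norm_num), Real.rpow_one]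

open Classical in
theorem dim_pos {S : Set ℕ} {δ : ℝ} (hδ : 0 < δ)
    (hS : ∀ n : ℕ, δ * n - 1 ≤ (Nat.count (· ∈ S) n : ℝ))
    {L : ℕ} (hL : 3 ≤ L) (hAP : ¬ HasAP S L) : dimH E ≠ 0 := by
  intro h0
  let G : (ℕ → Fin 2) → ℝ := fun ε => V4 (spread S ε)
  let f : ℝ → ℝ := fun x => Real.ofDigits (Function.invFun G x)
  have hf : ∀ ε, f (G ε) = Real.ofDigits ε := by
    intro ε
    have hG : G (Function.invFun G (G ε)) = G ε := Function.invFun_eq ⟨ε, rfl⟩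
    have := holder_key hδ hS (Function.invFun G (G ε)) ε
    have hG' : V4 (spread S (Function.invFun G (G ε))) = V4 (spread S ε) := hG
    rw [hG', sub_self, abs_zero, Real.zero_rpow (by positivity), mul_zero] at this
    exact sub_eq_zero.1 (abs_nonpos_iff.1 this)
  have hrange : range G ⊆ E := by
    rintro _ ⟨ε, rfl⟩
    refine V4_mem_E (spread_le S ε) (fun m hm => ?_) hL hAP
    by_contra hmS
    simp [spread, hmS] at hm
  have hr : (0 : ℝ) ≤ δ / 2 := by positivity
  have hC : (0 : ℝ) ≤ 2 * 6 ^ (δ / 2) := by positivity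
  have hold : HolderOnWith (Real.toNNReal (2 * 6 ^ (δ / 2))) (Real.toNNReal (δ / 2)) f
      (range G) := by
    rintro _ ⟨ε, rfl⟩ _ ⟨ε', rfl⟩
    rw [hf, hf, edist_dist, edist_dist, Real.dist_eq, Real.dist_eq]
    rw [Real.coe_toNNReal _ hr, ENNReal.ofReal_rpow_of_nonneg (abs_nonneg _) hr]
    change _ ≤ ENNReal.ofReal _ * _
    rw [← ENNReal.ofReal_mul hC]
    exact ENNReal.ofReal_le_ofReal (holder_key hδ hS ε ε')
  have hle := hold.dimH_image_le (Real.toNNReal_pos.2 (by positivity))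
  have hz : dimH (range G) = 0 := le_antisymm ((dimH_mono hrange).trans h0.le) bot_le
  rw [hz, ENNReal.zero_div] at hle
  have hsub : Set.Icc (0 : ℝ) 1 ⊆ f '' range G := by
    intro y hy
    obtain ⟨ε, -, rfl⟩ := Real.ofDigits_SurjOn (b := 2) (by norm_num) hy
    exact ⟨G ε, ⟨ε, rfl⟩, hf ε⟩
  have h1 : dimH (Set.Icc (0 : ℝ) 1) = 1 := by
    have := Real.dimH_of_nonempty_interior (E := ℝ) (s := Set.Icc (0 : ℝ) 1) (by
      rw [interior_Icc]; exact ⟨1 / 2, by norm_num⟩)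
    simpa using this
  have := (dimH_mono hsub).trans hle
  rw [h1] at this
  simp at this

theorem exists_windows {A : Set ℕ} (hA : 0 < banachDensity A) :
    ∃ c : ℝ, 0 < c ∧ ∀ n : ℕ, 1 ≤ n →
      ∃ M : ℕ, c * n ≤ ((A ∩ Set.Ico M (M + n)).ncard : ℝ) := by
  obtain ⟨c, hc, hc'⟩ := exists_between hA
  refine ⟨c / 2, by positivity, fun n hn => ?_⟩
  have hfreq := frequently_lt_of_lt_limsup (by
    refine IsCoboundedUnder.of_frequently_ge (a := 0) (Eventually.frequently (Eventually.of_forall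
      fun k => ?_))
    exact Real.iSup_nonneg fun M => by positivity) hc'
  obtain ⟨K, hKn, hK⟩ := (frequently_atTop.1 hfreq) n
  obtain ⟨M, hM⟩ := exists_lt_of_lt_ciSup hK
  have hK0 : (0 : ℝ) < K := by exact_mod_cast (by omega : 0 < K)
  rw [lt_div_iff₀ hK0] at hM
  by_contra! hcon
  have hcov : ∀ q : ℕ, ((A ∩ Set.Ico M (M + q * n)).ncard : ℝ) ≤ q * (c / 2 * n) := by
    intro q
    induction q with
    | zero => simp
    | succ q ih =>
      have hs : A ∩ Set.Ico M (M + (q + 1) * n) ⊆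
          (A ∩ Set.Ico M (M + q * n)) ∪ (A ∩ Set.Ico (M + q * n) (M + q * n + n)) := by
        rintro x ⟨hx, h1, h2⟩
        rw [Nat.succ_mul] at h2
        by_cases hlt : x < M + q * n
        · exact Or.inl ⟨hx, h1, hlt⟩
        · exact Or.inr ⟨hx, by omega, by omega⟩
      have h1 := Set.ncard_le_ncard hs (Set.Finite.union
        ((Set.finite_Ico _ _).inter_of_right _) ((Set.finite_Ico _ _).inter_of_right _))
      have h2 := h1.trans (Set.ncard_union_le _ _)
      have h3 : ((A ∩ Set.Ico M (M + (q + 1) * n)).ncard : ℝ) ≤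
        (A ∩ Set.Ico M (M + q * n)).ncard +
          (A ∩ Set.Ico (M + q * n) (M + q * n + n)).ncard := by exact_mod_cast h2
      have h4 := hcon (M + q * n)
      push_cast
      linarith
  have hq := hcov (K / n + 1)
  have hmod := Nat.div_add_mod K n
  have hmlt := Nat.mod_lt K (by omega : n > 0)
  have hKle : K ≤ (K / n + 1) * n := by
    rw [Nat.succ_mul, mul_comm]; omega
  have hKle2 : (K / n + 1) * n ≤ 2 * K := by
    rw [Nat.succ_mul, mul_comm]; omega
  have hmono : ((A ∩ Set.Ico M (M + K)).ncard : ℝ) ≤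
      (A ∩ Set.Ico M (M + (K / n + 1) * n)).ncard := by
    exact_mod_cast Set.ncard_le_ncard (Set.inter_subset_inter_right _
      (Set.Ico_subset_Ico_right (by omega))) ((Set.finite_Ico _ _).inter_of_right _)
  have hKr : (((K / n + 1 : ℕ) : ℝ) * n) ≤ 2 * K := by exact_mod_cast hKle2
  nlinarith

theorem block_AP {S : Set ℕ} {k : ℕ} (hk : 1 ≤ k) (h0 : 0 ∉ S) (h : HasAP S (4 * k)) :
    ∃ j a d : ℕ, 1 ≤ d ∧ ∀ t < k, a + t * d ∈ S ∧ 2 ^ j ≤ a + t * d ∧ a + t * d < 2 ^ (j + 1) := by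
  obtain ⟨a, d, hd, h⟩ := h
  have ha : a ≠ 0 := by
    rintro rfl
    exact h0 (by simpa using h 0 (by omega))
  obtain ⟨j, hj⟩ : ∃ j, j = Nat.log 2 (a + (4 * k - 1) * d) := ⟨_, rfl⟩
  have hj1 : 2 ^ j ≤ a + (4 * k - 1) * d := by
    rw [hj]; exact Nat.pow_log_le_self 2 (by omega)
  have hj2 : a + (4 * k - 1) * d < 2 ^ (j + 1) := by
    rw [hj]; exact Nat.lt_pow_succ_log_self (by norm_num) _
  obtain ⟨k, rfl⟩ : ∃ k', k = k' + 1 := ⟨k - 1, by omega⟩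
  have e1 : (4 * (k + 1) - 1) = 4 * k + 3 := by omega
  rw [e1] at hj1 hj2
  by_cases c1 : 2 ^ j ≤ a + (3 * k + 3) * d
  · refine ⟨j, a + (3 * k + 3) * d, d, hd, fun t ht => ⟨?_, by nlinarith, ?_⟩⟩
    · have := h (3 * k + 3 + t) (by omega)
      rwa [add_mul, ← add_assoc] at this
    · have : t * d ≤ k * d := Nat.mul_le_mul_right _ (by omega)
      nlinarith
  push Not at c1
  obtain ⟨i, rfl⟩ : ∃ i, j = i + 1 := by
    refine ⟨j - 1, ?_⟩
    have : j ≠ 0 := by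
      rintro rfl
      simp at c1
      omega
    omega
  by_cases c2 : 2 ^ i ≤ a + (2 * k + 2) * d
  · refine ⟨i, a + (2 * k + 2) * d, d, hd, fun t ht => ⟨?_, by nlinarith, ?_⟩⟩
    · have := h (2 * k + 2 + t) (by omega)
      rwa [add_mul, ← add_assoc] at this
    · have : t * d ≤ k * d := Nat.mul_le_mul_right _ (by omega)
      nlinarith
  push Not at c2
  exfalso
  rw [pow_succ] at hj1
  nlinarith

theorem stmt13 (hdim : dimH E = 0) :
    ∀ A : Set ℕ, 0 < banachDensity A → ∀ k : ℕ, HasAP A k := by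
  classical
  intro A hA k
  by_contra hk
  have hk1 : 1 ≤ k := by
    rcases Nat.eq_zero_or_pos k with rfl | h
    · exact absurd ⟨0, 1, le_rfl, fun t ht => absurd ht (by omega)⟩ hk
    · exact h
  obtain ⟨c, hc, hw⟩ := exists_windows hA
  choose M hM using fun j : ℕ => hw (2 ^ j) Nat.one_le_two_pow
  let S : Set ℕ := {n | n ≠ 0 ∧ M (Nat.log 2 n) + (n - 2 ^ Nat.log 2 n) ∈ A}
  have hlog : ∀ j n : ℕ, 2 ^ j ≤ n → n < 2 ^ (j + 1) → Nat.log 2 n = j := fun j n h1 h2 =>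
    Nat.log_eq_of_pow_le_of_lt_pow h1 h2
  have hAP : ¬ HasAP S (4 * k) := by
    intro h
    obtain ⟨j, a, d, hd, h⟩ := block_AP hk1 (fun h => h.1 rfl) h
    refine hk ⟨M j + (a - 2 ^ j), d, hd, fun t ht => ?_⟩
    obtain ⟨⟨-, h1⟩, h2, h3⟩ := h t ht
    have h4 := (h 0 (by omega)).2.1
    rw [hlog j _ h2 h3] at h1
    convert h1 using 1
    omega
  refine dim_pos (S := S) (δ := c / 4) (by positivity) ?_ (by omega) hAP hdim
  have hcnt : ∀ j : ℕ, c * 2 ^ j ≤ (Nat.count (· ∈ S) (2 ^ (j + 1)) : ℝ) := by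
    intro j
    have h1 := hM j
    push_cast at h1
    refine h1.trans ?_
    rw [Nat.count_eq_card_filter_range]
    norm_cast
    rw [← Set.ncard_coe_finset]
    refine Set.ncard_le_ncard_of_injOn (fun x => x - M j + 2 ^ j) ?_ ?_ (Finset.finite_toSet _)
    · rintro x ⟨hx, hx1, hx2⟩
      have hp : 0 < 2 ^ j := by positivity
      have e : 2 ^ (j + 1) = 2 * 2 ^ j := by ring
      have hl := hlog j (x - M j + 2 ^ j) (by omega) (by omega)
      simp only [Finset.coe_filter, Finset.mem_range, Set.mem_ofPred_eq, S]
      refine ⟨by omega, by omega, ?_⟩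
      rw [hl]
      convert hx using 1
      omega
    · rintro x ⟨-, hx1, -⟩ y ⟨-, hy1, -⟩ hxy
      simp only at hxy
      omega
  have hc1 : c ≤ 2 := by
    have h1 := hcnt 0
    have h2 : Nat.count (· ∈ S) (2 ^ (0 + 1)) ≤ 2 ^ (0 + 1) := Nat.count_le _
    have h3 : (Nat.count (· ∈ S) (2 ^ (0 + 1)) : ℝ) ≤ 2 := by exact_mod_cast h2
    simp only [pow_zero, mul_one] at h1
    linarith
  intro n
  have hnn : (0 : ℝ) ≤ (Nat.count (· ∈ S) n : ℝ) := by positivity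
  rcases Nat.lt_or_ge n 2 with hn | hn
  · have : (n : ℝ) ≤ 1 := by exact_mod_cast (by omega : n ≤ 1)
    nlinarith
  · have hl : 1 ≤ Nat.log 2 n := Nat.log_pos (by norm_num) hn
    obtain ⟨j, hj⟩ : ∃ j, Nat.log 2 n = j + 1 := ⟨Nat.log 2 n - 1, by omega⟩
    have h1 : 2 ^ (j + 1) ≤ n := by rw [← hj]; exact Nat.pow_log_le_self 2 (by omega)
    have h2 : n < 2 ^ (j + 1 + 1) := by
      rw [← hj]; exact Nat.lt_pow_succ_log_self (by norm_num) _
    have h3 : (Nat.count (· ∈ S) (2 ^ (j + 1)) : ℝ) ≤ Nat.count (· ∈ S) n := by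
      exact_mod_cast Nat.count_monotone _ h1
    have h4 : (n : ℝ) ≤ 4 * 2 ^ j := by
      have : n ≤ 4 * 2 ^ j := by
        have : 2 ^ (j + 1 + 1) = 4 * 2 ^ j := by ring
        omega
      exact_mod_cast this
    have h5 := hcnt j
    have h6 : c / 4 * n ≤ c / 4 * (4 * 2 ^ j) := mul_le_mul_of_nonneg_left h4 (by positivity)
    have h7 : c / 4 * n - 1 ≤ (Nat.count (· ∈ S) n : ℝ) := by linarith
    convert h7
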